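/- arXiv:1005.3876 — 2 statements merged into one kernel-verified Lean document; each statement's English description precedes it below -/
import Mathlib

section
/- Let G be a finite group, N a normal subgroup of G, and n ≥ 1 an integer. Then k_n(G) ≤ k_n(G/N) · k_n(N), where k_n(G) is the number of conjugacy classes of commuting n-tuples in G. -/
/-!
By Burnside's lemma, `k_n(G) * |G|` is the number of pairs of an element of `G` and a commuting
`n`-tuple fixed by it, that is, the number of commuting `(n + 1)`-tuples in `G`. As
`|G| = |G/N| * |N|`, it suffices that the number of commuting tuples is submultiplicative, and for
this that no choice of cosets of `N` has more commuting tuples in it than the trivial choice.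
Replace the cosets by `N` one at a time: if all entries but the `i`-th are prescribed, the possible
`i`-th entries form an empty set or a coset of `N ∩ C`, where `C` is the centralizer of the other
entries; dividing by one of them makes the `i`-th entry lie in `N`.
-/

/-- The commuting tuples in `G` indexed by `ι`, with the coordinatewise conjugation action of `G`.
For `ι = Fin n` this is `Hom(ℤⁿ, G)`. -/
def commutingTuples (ι G : Type*) [Group G] : SubMulAction (ConjAct G) (ι → G) where
  carrier := {t | ∀ i j, Commute (t i) (t j)}
  smul_mem' g _ ht i j := (ht i j).map (MulDistribMulAction.toMonoidHom G g)

/-- The commuting tuples in `G` that a homomorphism `φ` maps to the given tuple `c`. -/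
def commutingTuplesOver {ι G Q : Type*} [Group G] [Group Q] (φ : G →* Q) (c : ι → Q) :
    Set (ι → G) :=
  {t ∈ commutingTuples ι G | φ ∘ t = c}

namespace commutingTuples

open MulAction

variable {ι G Q : Type*} [Group G] [Group Q]

section Burnside

theorem smul_eq_self_iff (g : ConjAct G) (t : commutingTuples ι G) :
    g • t = t ↔ ∀ i, Commute (ConjAct.ofConjAct g) (t.1 i) := by
  simp only [Subtype.ext_iff, SetLike.val_smul, funext_iff, Pi.smul_apply, ConjAct.smul_def,
    mul_inv_eq_iff_eq_mul, commute_iff_eq]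

/-- A group element and a commuting tuple fixed by it form a longer commuting tuple, in which the
group element is the entry at `none`. -/
def sigmaFixedByEquivOption (ι G : Type*) [Group G] :
    (Σ g : ConjAct G, fixedBy (commutingTuples ι G) g) ≃ commutingTuples (Option ι) G where
  toFun p := ⟨fun o => o.elim (ConjAct.ofConjAct p.1) p.2.1.1, by
    have hfixed := (smul_eq_self_iff p.1 p.2.1).1 p.2.2
    rintro (_ | i) (_ | j)
    exacts [Commute.refl _, hfixed j, (hfixed i).symm, p.2.1.2 i j]⟩
  invFun t := ⟨ConjAct.toConjAct (t.1 none), ⟨fun i => t.1 (some i), fun _ _ => t.2 _ _⟩,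
    (smul_eq_self_iff _ _).2 fun _ => t.2 _ _⟩
  left_inv _ := rfl
  right_inv t := Subtype.ext (funext fun o => by cases o <;> rfl)

theorem card_orbits_mul_card (ι G : Type*) [Group G] :
    Nat.card (orbitRel.Quotient (ConjAct G) (commutingTuples ι G)) * Nat.card G =
      Nat.card (commutingTuples (Option ι) G) := by
  rw [Nat.card_congr (ConjAct.toConjAct (G := G)).toEquiv, ← Nat.card_prod]
  exact Nat.card_congr <|
    (sigmaFixedByEquivOrbitsProdGroup (ConjAct G) (commutingTuples ι G)).symm.trans
      (sigmaFixedByEquivOption ι G)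

theorem card_quot_conj_eq_card_orbits (ι G : Type*) [Group G] :
    Nat.card (Quot fun t t' : {f : ι → G // ∀ i j, Commute (f i) (f j)} =>
        ∃ g : G, ∀ i, (t' : ι → G) i = g * (t : ι → G) i * g⁻¹) =
      Nat.card (orbitRel.Quotient (ConjAct G) (commutingTuples ι G)) := by
  refine Nat.card_congr (Quot.congrRight fun (t t' : commutingTuples ι G) => ?_)
  refine Iff.trans ?_ (orbitRel (ConjAct G) (commutingTuples ι G)).comm'
  refine (ConjAct.toConjAct (G := G)).toEquiv.exists_congr fun g => ?_
  change _ ↔ ConjAct.toConjAct g • t = t'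
  rw [Subtype.ext_iff, funext_iff]
  exact forall_congr' fun _ => eq_comm

end Burnside

section Fibers

theorem mulSingle_inv_mul_mem [DecidableEq ι] {s t : ι → G} {i : ι}
    (hs : s ∈ commutingTuples ι G) (ht : t ∈ commutingTuples ι G) (hst : ∀ j ≠ i, s j = t j) :
    Pi.mulSingle i (s i)⁻¹ * t ∈ commutingTuples ι G := by
  have hcomm (j : ι) (hj : j ≠ i) : Commute ((s i)⁻¹ * t i) (t j) :=
    (hst j hj ▸ hs i j).inv_left.mul_left (ht i j)
  intro j k
  by_cases hj : j = i <;> by_cases hk : k = i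
  · rw [hj, hk]
  · simpa [hj, hk] using hcomm k hk
  · simpa [hj, hk] using (hcomm j hj).symm
  · simpa [hj, hk] using ht j k

theorem ncard_over_le_ncard_over_update [Finite ι] [Finite G] [DecidableEq ι] (φ : G →* Q)
    (c : ι → Q) (i : ι) :
    (commutingTuplesOver φ c).ncard ≤
      (commutingTuplesOver φ (Function.update c i 1)).ncard := by
  let erase (t : ι → G) : ι → G := Function.update t i 1
  -- `base t` does not depend on `t i`, so dividing the `i`-th entry by `base t i` is injective.
  let base (t : ι → G) : ι → G := Function.invFunOn erase (commutingTuplesOver φ c) (erase t)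
  have base_mem {t} (ht : t ∈ commutingTuplesOver φ c) : base t ∈ commutingTuplesOver φ c :=
    Function.invFunOn_apply_mem ht
  have base_apply {t} (ht : t ∈ commutingTuplesOver φ c) (j : ι) (hj : j ≠ i) :
      base t j = t j := by
    simpa [erase, hj] using congrFun (Function.invFunOn_apply_eq (f := erase) ht) j
  have erase_mulSingle_mul (g : G) (t : ι → G) : erase (Pi.mulSingle i g * t) = erase t := by
    ext j
    by_cases hj : j = i <;> simp [erase, hj]
  refine Set.ncard_le_ncard_of_injOn (fun t => Pi.mulSingle i (base t i)⁻¹ * t) ?_ ?_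
  · intro t ht
    refine ⟨mulSingle_inv_mul_mem (base_mem ht).1 ht.1 (base_apply ht), funext fun j => ?_⟩
    have hbase : φ (base t i) = c i := congrFun (base_mem ht).2 i
    have hφ (k : ι) : φ (t k) = c k := congrFun ht.2 k
    by_cases hj : j = i <;> simp [hj, hbase, hφ]
  · intro t _ t' _ heq
    have herase : erase t = erase t' := by
      simpa only [erase_mulSingle_mul] using congrArg erase heq
    have hbase : base t = base t' := congrArg (Function.invFunOn erase _) herase
    simpa only [hbase, mul_right_inj] using heq

theorem ncard_over_le_ncard_over_one [Finite ι] [Finite G] (φ : G →* Q) (c : ι → Q) :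
    (commutingTuplesOver φ c).ncard ≤ (commutingTuplesOver φ (1 : ι → Q)).ncard := by
  classical
  have := Fintype.ofFinite ι
  suffices ∀ s : Finset ι, (commutingTuplesOver φ c).ncard ≤
      (commutingTuplesOver φ (s.piecewise 1 c)).ncard by
    simpa only [Finset.piecewise_univ] using this Finset.univ
  intro s
  induction s using Finset.induction_on with
  | empty => rw [Finset.piecewise_empty]
  | insert i s _ ih =>
    rw [Finset.piecewise_insert]
    exact ih.trans (ncard_over_le_ncard_over_update φ _ i)

theorem ncard_over_one (φ : G →* Q) :
    (commutingTuplesOver φ (1 : ι → Q)).ncard = Nat.card (commutingTuples ι φ.ker) := by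
  have himage : commutingTuplesOver φ (1 : ι → Q) =
      (φ.ker.subtype ∘ ·) '' (commutingTuples ι φ.ker : Set (ι → φ.ker)) := by
    ext t
    constructor
    · rintro ⟨ht, hφ⟩
      exact ⟨fun i => ⟨t i, congrFun hφ i⟩, fun i j => Subtype.ext (ht i j), rfl⟩
    · rintro ⟨u, hu, rfl⟩
      exact ⟨fun i j => (hu i j).map φ.ker.subtype, funext fun i => (u i).2⟩
  rw [himage, Set.ncard_image_of_injective _ φ.ker.subtype_injective.comp_left]
  rfl

theorem card_le_card_mul_card_ker [Finite ι] [Finite G] [Finite Q] (φ : G →* Q) :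
    Nat.card (commutingTuples ι G) ≤
      Nat.card (commutingTuples ι Q) * Nat.card (commutingTuples ι φ.ker) := by
  let map (t : commutingTuples ι G) : commutingTuples ι Q :=
    ⟨φ ∘ t.1, fun i j => (t.2 i j).map φ⟩
  have hfiber (c : commutingTuples ι Q) :
      Nat.card {t // map t = c} ≤ Nat.card (commutingTuples ι φ.ker) := by
    rw [← ncard_over_one]
    refine le_trans ?_ (ncard_over_le_ncard_over_one φ c.1)
    exact Nat.card_le_card_of_injective
      (fun t => (⟨t.1.1, t.1.2, congrArg Subtype.val t.2⟩ : commutingTuplesOver φ c.1))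
      fun t t' h => Subtype.ext (Subtype.ext (congrArg (·.1) h))
  have := Fintype.ofFinite (commutingTuples ι Q)
  calc Nat.card (commutingTuples ι G)
      = ∑ c, Nat.card {t // map t = c} := by
        rw [← Nat.card_sigma, Nat.card_congr (Equiv.sigmaFiberEquiv map)]
    _ ≤ ∑ _c : commutingTuples ι Q, Nat.card (commutingTuples ι φ.ker) :=
        Finset.sum_le_sum fun c _ => hfiber c
    _ = Nat.card (commutingTuples ι Q) * Nat.card (commutingTuples ι φ.ker) := by
        rw [Finset.sum_const, Finset.card_univ, smul_eq_mul, Fintype.card_eq_nat_card]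

end Fibers

end commutingTuples

/-- Let `G` be a finite group, `N ⊴ G`, and `n ≥ 1`.  Then
`k_n(G) ≤ k_n(G/N)·k_n(N)`, where `k_n(G)` denotes the number of conjugacy classes of
commuting `n`-tuples in `G`. -/
theorem stmt_15 {G : Type*} [Group G] [Fintype G] (N : Subgroup G) [N.Normal]
    (n : ℕ) (hn : 1 ≤ n) :
    Nat.card (Quot (fun t t' : {f : Fin n → G // ∀ i j, Commute (f i) (f j)} =>
        ∃ g : G, ∀ i, (t' : Fin n → G) i = g * (t : Fin n → G) i * g⁻¹))
      ≤ Nat.card (Quot (fun t t' : {f : Fin n → G ⧸ N // ∀ i j, Commute (f i) (f j)} =>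
          ∃ g : G ⧸ N, ∀ i, (t' : Fin n → G ⧸ N) i = g * (t : Fin n → G ⧸ N) i * g⁻¹))
        * Nat.card (Quot (fun t t' : {f : Fin n → ↥N // ∀ i j, Commute (f i) (f j)} =>
          ∃ g : ↥N, ∀ i, (t' : Fin n → ↥N) i = g * (t : Fin n → ↥N) i * g⁻¹)) := by
  have h := commutingTuples.card_le_card_mul_card_ker (ι := Option (Fin n)) (QuotientGroup.mk' N)
  rw [QuotientGroup.ker_mk'] at h
  simp only [commutingTuples.card_quot_conj_eq_card_orbits]
  refine Nat.le_of_mul_le_mul_right (c := Nat.card G) ?_ Nat.card_pos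
  rwa [commutingTuples.card_orbits_mul_card, N.card_eq_card_quotient_mul_card_subgroup,
    mul_mul_mul_comm, commutingTuples.card_orbits_mul_card, commutingTuples.card_orbits_mul_card]
end

section
/- Let G be a finite nonabelian group. Then for every integer n ≥ 0, 2^{2n+1} · |Hom(ℤ^{n+1}, G)| ≤ (3·2^n − 1) · |G|^{n+1} (equivalently, P_2(G, n+1) ≤ (3·2^n − 1)/2^{2n+1}, where P_2(G,s) = |Hom(ℤ^s,G)|/|G|^s). -/
/-! Fix the first entry `g` of a commuting tuple: the remaining entries form an arbitrary commuting
tuple in the centralizer of `g`. If `g` is central this is a commuting tuple in `G`; otherwise the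
centralizer has index at least `p`, the least prime divisor of `|G|`, so at most `(|G| / p) ^ n`
continuations of length `n` exist. Since `G` modulo its center is not cyclic, its order is not
prime, hence at least `p ^ 2`, and induction on the length of the tuple gives the bound. -/

section Index

variable {G : Type*} [Group G]

theorem minFac_card_le_index {H : Subgroup G} [H.FiniteIndex] (hH : H ≠ ⊤) :
    (Nat.card G).minFac ≤ H.index :=
  Nat.minFac_le_of_dvd (H.one_lt_index_of_ne_top hH) H.index_dvd_card

theorem minFac_card_sq_le_index_of_not_isCyclic {N : Subgroup G} [N.Normal] [N.FiniteIndex]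
    (hN : ¬ IsCyclic (G ⧸ N)) : (Nat.card G).minFac ^ 2 ≤ N.index := by
  have hprime : ¬ N.index.Prime := fun h ↦
    have := Fact.mk h
    hN (isCyclic_of_prime_card (p := N.index) rfl)
  have hone : N.index ≠ 1 := fun h ↦
    have := (Nat.card_eq_one_iff_unique.mp h).1
    hN isCyclic_of_subsingleton
  calc (Nat.card G).minFac ^ 2
      ≤ N.index.minFac ^ 2 := by
        gcongr
        exact Nat.minFac_le_of_dvd (Nat.minFac_prime hone).two_le
          (N.index.minFac_dvd.trans N.index_dvd_card)
    _ ≤ N.index :=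
        Nat.minFac_sq_le_self (Nat.pos_of_ne_zero Subgroup.FiniteIndex.index_ne_zero) hprime

variable [Finite G]

theorem minFac_card_sq_mul_card_center_le (hG : ∃ a b : G, a * b ≠ b * a) :
    (Nat.card G).minFac ^ 2 * Nat.card (Subgroup.center G) ≤ Nat.card G := by
  have hcyclic : ¬ IsCyclic (G ⧸ Subgroup.center G) := fun _ ↦
    let ⟨a, b, hab⟩ := hG
    hab ((isMulCommutative_of_isCyclic_quotient_center_self (G := G)).is_comm.comm a b)
  calc (Nat.card G).minFac ^ 2 * Nat.card (Subgroup.center G)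
      ≤ (Subgroup.center G).index * Nat.card (Subgroup.center G) := by
        gcongr
        exact minFac_card_sq_le_index_of_not_isCyclic hcyclic
    _ = Nat.card G := Subgroup.index_mul_card _

theorem minFac_card_mul_card_centralizer_le {g : G} (hg : g ∉ Subgroup.center G) :
    (Nat.card G).minFac * Nat.card (Subgroup.centralizer {g}) ≤ Nat.card G := by
  have hproper : Subgroup.centralizer {g} ≠ ⊤ := by
    rwa [Ne, Subgroup.centralizer_eq_top_iff_subset, Set.singleton_subset_iff]
  calc (Nat.card G).minFac * Nat.card (Subgroup.centralizer {g})
      ≤ (Subgroup.centralizer {g}).index * Nat.card (Subgroup.centralizer {g}) := by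
        gcongr
        exact minFac_card_le_index hproper
    _ = Nat.card G := Subgroup.index_mul_card _

end Index

/-- Commuting `s`-tuples in `G`, that is, `Hom(ℤ^s, G)` when `G` is a group. Entries are required
to commute for all pairs of indices, which includes the trivial condition `i = j`. -/
abbrev CommutingTuple (s : ℕ) (G : Type*) [Mul G] : Type _ :=
  {t : Fin s → G // ∀ i j, Commute (t i) (t j)}

namespace CommutingTuple

theorem card_le_card_pow (s : ℕ) (G : Type*) [Mul G] [Finite G] :
    Nat.card (CommutingTuple s G) ≤ Nat.card G ^ s :=
  (Finite.card_subtype_le _).trans_eq (by rw [Nat.card_fun, Nat.card_fin])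

theorem card_le_card_of_injective (s : ℕ) {G H : Type*} [Mul G] [Mul H] [Finite H]
    (f : G →ₙ* H) (hf : Function.Injective f) :
    Nat.card (CommutingTuple s G) ≤ Nat.card (CommutingTuple s H) :=
  Nat.card_le_card_of_injective
    (fun t ↦ ⟨f ∘ t.1, fun i j ↦ (t.2 i j).map f⟩ : CommutingTuple s G → CommutingTuple s H)
    fun _ _ h ↦ Subtype.ext (hf.comp_left (congrArg Subtype.val h))

/-- A commuting tuple, split into its first entry `g` and its tail, seen as a commuting tuple in
the centralizer of `g`. -/
def succEquivSigma (s : ℕ) (G : Type*) [Group G] :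
    CommutingTuple (s + 1) G ≃ Σ g : G, CommutingTuple s (Subgroup.centralizer {g}) where
  toFun t := ⟨t.1 0, fun i ↦ ⟨t.1 i.succ, Subgroup.mem_centralizer_singleton_iff.mpr (t.2 _ _)⟩,
    fun _ _ ↦ Subtype.ext (t.2 _ _)⟩
  invFun u := ⟨Fin.cons u.1 fun i ↦ (u.2.1 i : G), by
    have hhead (i : Fin s) : Commute (u.2.1 i : G) u.1 :=
      Subgroup.mem_centralizer_singleton_iff.mp (u.2.1 i).2
    have htail (i j : Fin s) : Commute (u.2.1 i : G) (u.2.1 j) :=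
      (u.2.2 i j).map (Subgroup.subtype _)
    exact Fin.cases (Fin.cases (Commute.refl _) fun j ↦ (hhead j).symm)
      fun i ↦ Fin.cases (hhead i) (htail i)⟩
  left_inv t := Subtype.ext (Fin.cons_self_tail t.1)
  right_inv _ := rfl

variable {G : Type*} [Group G] [Finite G]

theorem pow_mul_card_centralizer_le {p : ℕ} (hp : p ≤ (Nat.card G).minFac) (s : ℕ) {g : G}
    (hg : g ∉ Subgroup.center G) :
    p ^ s * Nat.card (CommutingTuple s (Subgroup.centralizer {g})) ≤ Nat.card G ^ s :=
  calc p ^ s * Nat.card (CommutingTuple s (Subgroup.centralizer {g}))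
      ≤ (Nat.card G).minFac ^ s * Nat.card (Subgroup.centralizer {g}) ^ s := by
        gcongr
        exact card_le_card_pow s _
    _ = ((Nat.card G).minFac * Nat.card (Subgroup.centralizer {g})) ^ s := (mul_pow _ _ _).symm
    _ ≤ Nat.card G ^ s := by
        gcongr
        exact minFac_card_mul_card_centralizer_le hg

theorem pow_mul_card_succ_le {p : ℕ} (hp : p ≤ (Nat.card G).minFac) (s : ℕ) :
    p ^ s * Nat.card (CommutingTuple (s + 1) G) ≤
      Nat.card (Subgroup.center G) * (p ^ s * Nat.card (CommutingTuple s G)) +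
        (Nat.card G - Nat.card (Subgroup.center G)) * Nat.card G ^ s := by
  classical
  have := Fintype.ofFinite G
  let weight (g : G) := p ^ s * Nat.card (CommutingTuple s (Subgroup.centralizer {g}))
  have hcentral : ∑ z : Subgroup.center G, weight z ≤
      Nat.card (Subgroup.center G) * (p ^ s * Nat.card (CommutingTuple s G)) := by
    rw [Nat.card_eq_fintype_card (α := Subgroup.center G)]
    refine Finset.sum_le_card_nsmul _ _ _ fun z _ ↦ Nat.mul_le_mul_left _ ?_
    exact card_le_card_of_injective s (Subgroup.subtype (.centralizer {(z : G)}) : _ →ₙ* G)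
      (Subgroup.subtype_injective _)
  have hnoncentral : ∑ g : {g // g ∉ Subgroup.center G}, weight g ≤
      (Nat.card G - Nat.card (Subgroup.center G)) * Nat.card G ^ s := by
    have hcard : Fintype.card {g // g ∉ Subgroup.center G} =
        Nat.card G - Nat.card (Subgroup.center G) := by
      rw [Fintype.card_subtype_compl, Nat.card_eq_fintype_card, Nat.card_eq_fintype_card]
    rw [← hcard]
    exact Finset.sum_le_card_nsmul _ _ _ fun g _ ↦ pow_mul_card_centralizer_le hp s g.2
  calc p ^ s * Nat.card (CommutingTuple (s + 1) G)
      = ∑ g, weight g := by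
        rw [Nat.card_congr (succEquivSigma s G), Nat.card_sigma, Finset.mul_sum]
    _ = ∑ z : Subgroup.center G, weight z + ∑ g : {g // g ∉ Subgroup.center G}, weight g :=
        (Fintype.sum_subtype_add_sum_subtype (· ∈ Subgroup.center G) weight).symm
    _ ≤ _ := add_le_add hcentral hnoncentral

end CommutingTuple

theorem stmt_18_general {G : Type*} [Group G] [Finite G] (hna : ∃ a b : G, a * b ≠ b * a)
    {p : ℕ} (hp₀ : 0 < p) (hp : p ≤ (Nat.card G).minFac) (n : ℕ) :
    p ^ (2 * n + 1) * Nat.card {t : Fin (n + 1) → G // ∀ i j, Commute (t i) (t j)}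
      ≤ (p ^ (n + 1) + p ^ n - 1) * Nat.card G ^ (n + 1) := by
  induction n with
  | zero => simpa only [mul_zero, zero_add, pow_one, pow_zero, Nat.add_sub_cancel] using
      Nat.mul_le_mul_left p (CommutingTuple.card_le_card_pow 1 G)
  | succ n ih =>
    have hrec := CommutingTuple.pow_mul_card_succ_le hp (n + 1)
    have hcenter : p ^ 2 * Nat.card (Subgroup.center G) ≤ Nat.card G :=
      (Nat.mul_le_mul_right _ (Nat.pow_le_pow_left hp 2)).trans
        (minFac_card_sq_mul_card_center_le hna)
    have hcenter_le : Nat.card (Subgroup.center G) ≤ Nat.card G := Subgroup.card_le_card_group _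
    have hpow (k : ℕ) : 1 ≤ p ^ k := Nat.one_le_pow _ _ hp₀
    zify [hcenter_le, (hpow n).trans (Nat.le_add_left _ (p ^ (n + 1))),
      (hpow (n + 1)).trans (Nat.le_add_left _ (p ^ (n + 1 + 1)))] at hrec hcenter ih hpow ⊢
    set c : ℤ := (Nat.card (CommutingTuple (n + 1) G) : ℤ)
    set c' : ℤ := (Nat.card (CommutingTuple (n + 1 + 1) G) : ℤ)
    set z : ℤ := (Nat.card (Subgroup.center G) : ℤ)
    set N : ℤ := (Nat.card G : ℤ)
    have hnonneg : 0 ≤ ((p : ℤ) ^ (n + 1) - 1) * N ^ (n + 1) :=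
      mul_nonneg (sub_nonneg.mpr (hpow _)) (by positivity)
    calc (p : ℤ) ^ (2 * (n + 1) + 1) * c' = p ^ (n + 2) * (p ^ (n + 1) * c') := by ring
      _ ≤ p ^ (n + 2) * (z * (p ^ (n + 1) * c) + (N - z) * N ^ (n + 1)) := by gcongr
      _ = p ^ 2 * z * (p ^ (2 * n + 1) * c) + p ^ (n + 2) * (N - z) * N ^ (n + 1) := by ring
      _ ≤ p ^ 2 * z * ((p ^ (n + 1) + p ^ n - 1) * N ^ (n + 1))
            + p ^ (n + 2) * (N - z) * N ^ (n + 1) := by gcongr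
      _ = p ^ 2 * z * ((p ^ (n + 1) - 1) * N ^ (n + 1)) + p ^ (n + 2) * N ^ (n + 2) := by ring
      _ ≤ N * ((p ^ (n + 1) - 1) * N ^ (n + 1)) + p ^ (n + 2) * N ^ (n + 2) := by gcongr
      _ = (p ^ (n + 1 + 1) + p ^ (n + 1) - 1) * N ^ (n + 1 + 1) := by ring

/-- Let `G` be a finite nonabelian group.  Then for every `n ≥ 0`,
`2^{2n+1}·|Hom(ℤ^{n+1}, G)| ≤ (3·2^n − 1)·|G|^{n+1}`; equivalently
`P_2(G,n+1) ≤ (3·2^n − 1)/2^{2n+1}`. -/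
theorem stmt_18 {G : Type*} [Group G] [Fintype G]
    (hna : ∃ a b : G, a * b ≠ b * a) (n : ℕ) :
    2 ^ (2 * n + 1) * Nat.card {t : Fin (n + 1) → G // ∀ i j, Commute (t i) (t j)}
      ≤ (3 * 2 ^ n - 1) * (Nat.card G) ^ (n + 1) := by
  have : Nontrivial G := let ⟨_, _, h⟩ := hna; ⟨_, _, h⟩
  rw [show 3 * 2 ^ n = 2 ^ (n + 1) + 2 ^ n by ring]
  exact stmt_18_general hna two_pos (Nat.minFac_prime Finite.one_lt_card.ne').two_le n
end
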